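/- arXiv:2511.09189 — 4 statements merged into one kernel-verified Lean document; each statement's English description precedes it below -/
import Mathlib

section
/- Let X be a locally compact Hausdorff topological space. Then every closed left ideal of the C*-algebra C₀(X) is a two-sided ideal, and the map sending an open subset U ⊆ X to the closed ideal I_U := {f ∈ C₀(X) | f(x) = 0 for all x ∈ X \ U} is an inclusion-preserving bijection from the set of open subsets of X onto the set of closed ideals of C₀(X); moreover I_{U ∩ V} = I_U ∩ I_V for all open U, V ⊆ X. -/
open scoped ZeroAtInfty
open Filter Topology

namespace ZeroAtInftyContinuousMap

variable {X : Type*} [TopologicalSpace X]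

/-- The functions in `C₀(X, ℂ)` vanishing on a set `s`. -/
def vanishingSubmodule (s : Set X) : Submodule ℂ C₀(X, ℂ) where
  carrier := {f | ∀ x ∈ s, f x = 0}
  add_mem' hf hg x hx := by simp [hf x hx, hg x hx]
  zero_mem' _ _ := rfl
  smul_mem' c f hf x hx := by simp [hf x hx]

theorem continuous_eval (x : X) : Continuous fun f : C₀(X, ℂ) => f x :=
  (continuous_eval_const (F := BoundedContinuousFunction X ℂ) x).comp isometry_toBCF.continuous

theorem isClosed_vanishingSubmodule (s : Set X) :
    IsClosed (vanishingSubmodule s : Set C₀(X, ℂ)) := by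
  have h : (vanishingSubmodule s : Set C₀(X, ℂ)) = ⋂ x ∈ s, {f | f x = 0} := by
    ext f
    simp only [Set.mem_iInter]
    rfl
  rw [h]
  exact isClosed_biInter fun x _ => isClosed_eq (continuous_eval x) continuous_const

theorem norm_apply_le (f : C₀(X, ℂ)) (x : X) : ‖f x‖ ≤ ‖f‖ :=
  f.toBCF.norm_coe_le_norm x

theorem isCompact_le_norm (f : C₀(X, ℂ)) {ε : ℝ} (hε : 0 < ε) :
    IsCompact {x | ε ≤ ‖f x‖} := by
  have h : ∀ᶠ x in cocompact X, ‖f x‖ < ε := by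
    have := (zero_at_infty f).norm
    rw [norm_zero] at this
    exact this.eventually_lt_const hε
  obtain ⟨K, hK, hKf⟩ := mem_cocompact.1 h
  refine hK.of_isClosed_subset (isClosed_le continuous_const (map_continuous f).norm) ?_
  intro x hx
  by_contra hxK
  exact (show ‖f x‖ < ε from hKf hxK).not_ge hx

/-- A locally compact Hausdorff space has enough functions in `C₀` to separate points from
closed sets. -/
theorem exists_apply_eq_one_of_mem_isOpen [LocallyCompactSpace X] [T2Space X] {U : Set X}
    (hU : IsOpen U) {x : X} (hx : x ∈ U) :
    ∃ f : C₀(X, ℂ), f x = 1 ∧ ∀ y ∈ Uᶜ, f y = 0 := by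
  obtain ⟨f, hfx, hfU, hf, -⟩ := exists_continuous_one_zero_of_isCompact
    (isCompact_singleton (x := x)) hU.isClosed_compl (by simpa using hx)
  have hc : HasCompactSupport fun y => (f y : ℂ) := hf.comp_left Complex.ofReal_zero
  refine ⟨⟨⟨fun y => (f y : ℂ), by fun_prop⟩, hc.is_zero_at_infty⟩, ?_, fun y hy => ?_⟩
  · change (f x : ℂ) = 1
    simp [hfx rfl]
  · change (f y : ℂ) = 0
    simp [hfU hy]

/-- The quotient of a function in `C₀` by a continuous function bounded below by `δ > 0`. -/
noncomputable def divOfLe (f : C₀(X, ℂ)) (H : X → ℝ) (hH : Continuous H) {δ : ℝ} (hδ : 0 < δ)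
    (h : ∀ x, δ ≤ H x) : C₀(X, ℂ) where
  toFun x := f x / H x
  continuous_toFun := (map_continuous f).div₀ (by fun_prop) fun x =>
    Complex.ofReal_ne_zero.2 (hδ.trans_le (h x)).ne'
  zero_at_infty' := by
    have hlim : Tendsto (fun x => ‖f x‖ / δ) (cocompact X) (𝓝 0) := by
      simpa using (zero_at_infty f).norm.div_const δ
    refine squeeze_zero_norm (fun x => ?_) hlim
    rw [norm_div, Complex.norm_real, Real.norm_of_nonneg (hδ.le.trans (h x))]
    exact div_le_div_of_nonneg_left (norm_nonneg _) hδ (h x)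

/-- If a left ideal has no common zero on a compact set, it contains a nonnegative function that
is positive there. -/
theorem exists_mem_nonneg_pos_on_isCompact {L : Submodule ℂ C₀(X, ℂ)}
    (hL : ∀ a ∈ L, ∀ b : C₀(X, ℂ), b * a ∈ L) {K : Set X} (hK : IsCompact K)
    (hKL : ∀ x ∈ K, ∃ g ∈ L, g x ≠ 0) :
    ∃ h ∈ L, ∃ H : X → ℝ, Continuous H ∧ (∀ x, h x = H x) ∧ (∀ x, 0 ≤ H x) ∧
      ∀ x ∈ K, 0 < H x := by
  choose! g hgL hg using hKL
  refine hK.induction_on (p := fun s => ∃ h ∈ L, ∃ H : X → ℝ, Continuous H ∧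
    (∀ x, h x = H x) ∧ (∀ x, 0 ≤ H x) ∧ ∀ x ∈ s, 0 < H x) ?_ ?_ ?_ ?_
  · exact ⟨0, L.zero_mem, 0, continuous_const, by simp, by simp, by simp⟩
  · rintro s t hst ⟨h, hhL, H, hHc, hhH, hH0, hHt⟩
    exact ⟨h, hhL, H, hHc, hhH, hH0, fun x hx => hHt x (hst hx)⟩
  · rintro s t ⟨h, hhL, H, hHc, hhH, hH0, hHs⟩ ⟨k, hkL, J, hJc, hkJ, hJ0, hJt⟩
    refine ⟨h + k, L.add_mem hhL hkL, H + J, hHc.add hJc, fun x => by simp [hhH, hkJ],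
      fun x => add_nonneg (hH0 x) (hJ0 x), ?_⟩
    rintro x (hx | hx)
    · exact add_pos_of_pos_of_nonneg (hHs x hx) (hJ0 x)
    · exact add_pos_of_nonneg_of_pos (hH0 x) (hJt x hx)
  · intro x hx
    refine ⟨{y | g x y ≠ 0}, mem_nhdsWithin_of_mem_nhds
      ((isOpen_ne_fun (map_continuous (g x)) continuous_const).mem_nhds (hg x hx)),
      star (g x) * g x, hL _ (hgL x hx) _, fun y => ‖g x y‖ ^ 2,
      (map_continuous (g x)).norm.pow 2, fun y => ?_, fun y => by positivity, fun y hy => ?_⟩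
    · simp [Complex.conj_mul']
    · exact pow_pos (norm_pos_iff.2 hy) 2

/-- A function vanishing at all common zeros of a closed left ideal of `C₀` lies in the ideal. -/
theorem mem_of_forall_eq_zero {L : Submodule ℂ C₀(X, ℂ)}
    (hLc : IsClosed (L : Set C₀(X, ℂ))) (hL : ∀ a ∈ L, ∀ b : C₀(X, ℂ), b * a ∈ L)
    {f : C₀(X, ℂ)} (hf : ∀ x, (∀ g ∈ L, g x = 0) → f x = 0) : f ∈ L := by
  rw [← SetLike.mem_coe, ← hLc.closure_eq, Metric.mem_closure_iff]
  intro ε hε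
  obtain ⟨h, hhL, H, hHc, hhH, hH0, hHK⟩ := exists_mem_nonneg_pos_on_isCompact hL
    (isCompact_le_norm f (half_pos hε)) (fun x hx => by
      by_contra! hx0
      have : ε / 2 ≤ ‖f x‖ := hx
      rw [hf x hx0, norm_zero] at this
      linarith)
  obtain ⟨m, hm, hmK⟩ := (isCompact_le_norm f (half_pos hε)).exists_forall_le'
    hHc.continuousOn hHK
  have hN : 0 < ‖f‖ + 1 := by positivity
  obtain ⟨δ, hδ, hδm⟩ : ∃ δ : ℝ, 0 < δ ∧ (‖f‖ + 1) * δ ≤ ε / 2 * m :=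
    ⟨ε / 2 * m / (‖f‖ + 1), by positivity, (mul_div_cancel₀ _ hN.ne').le⟩
  let q := divOfLe f (fun x => H x + δ) (by fun_prop) hδ fun x => by linarith [hH0 x]
  refine ⟨q * h, hL h hhL q, ?_⟩
  have hle : dist f (q * h) ≤ ε / 2 := by
    rw [dist_eq_norm, ← norm_toBCF_eq_norm, BoundedContinuousFunction.norm_le (by positivity)]
    intro x
    have hpos : 0 < H x + δ := by linarith [hH0 x]
    have hposC : (H x : ℂ) + δ ≠ 0 := by exact_mod_cast hpos.ne'
    have hx : f x - q x * h x = f x * ((δ / (H x + δ) : ℝ) : ℂ) := by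
      change f x - f x / ((H x + δ : ℝ) : ℂ) * h x = _
      rw [hhH]
      push_cast
      field_simp
      ring
    change ‖f x - q x * h x‖ ≤ ε / 2
    rw [hx, norm_mul, Complex.norm_real, Real.norm_of_nonneg (by positivity), ← mul_div_assoc,
      div_le_iff₀ hpos]
    by_cases hxK : ε / 2 ≤ ‖f x‖
    · have := hmK x hxK
      have := norm_apply_le f x
      nlinarith
    · have := hH0 x
      nlinarith
  linarith

end ZeroAtInftyContinuousMap

open ZeroAtInftyContinuousMap

/-- For a locally compact Hausdorff space `X`, every closed left ideal of
`C₀(X)` is a two-sided ideal, and `U ↦ I_U := {f | f = 0 on X \ U}` is an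
inclusion-preserving bijection from open subsets of `X` onto closed ideals of `C₀(X)`,
with `I_{U ∩ V} = I_U ∩ I_V`. -/
theorem stmt0 (X : Type*) [TopologicalSpace X] [LocallyCompactSpace X] [T2Space X]
    (I : Set X → Set C₀(X, ℂ))
    (hI : ∀ U : Set X, I U = {f : C₀(X, ℂ) | ∀ x ∈ Uᶜ, f x = 0}) :
    -- every closed left ideal is a two-sided ideal
    (∀ L : Submodule ℂ C₀(X, ℂ), IsClosed (L : Set C₀(X, ℂ)) →
      (∀ a ∈ L, ∀ b : C₀(X, ℂ), b * a ∈ L) → (∀ a ∈ L, ∀ b : C₀(X, ℂ), a * b ∈ L)) ∧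
    -- each `I U` is a closed (two-sided) ideal
    (∀ U : Set X, IsOpen U → ∃ L : Submodule ℂ C₀(X, ℂ),
      (L : Set C₀(X, ℂ)) = I U ∧ IsClosed (L : Set C₀(X, ℂ)) ∧
      (∀ a ∈ L, ∀ b : C₀(X, ℂ), b * a ∈ L ∧ a * b ∈ L)) ∧
    -- inclusion preserving (hence injective)
    (∀ U V : Set X, IsOpen U → IsOpen V → (U ⊆ V ↔ I U ⊆ I V)) ∧
    -- surjective onto the set of closed ideals
    (∀ L : Submodule ℂ C₀(X, ℂ), IsClosed (L : Set C₀(X, ℂ)) →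
      (∀ a ∈ L, ∀ b : C₀(X, ℂ), b * a ∈ L) →
      ∃ U : Set X, IsOpen U ∧ (L : Set C₀(X, ℂ)) = I U) ∧
    -- meets are preserved
    (∀ U V : Set X, IsOpen U → IsOpen V → I (U ∩ V) = I U ∩ I V) := by
  obtain rfl : I = fun U => {f : C₀(X, ℂ) | ∀ x ∈ Uᶜ, f x = 0} := funext hI
  refine ⟨fun L _ hL a ha b => mul_comm b a ▸ hL a ha b, fun U _ => ?_, fun U V hU _ => ?_,
    fun L hLc hL => ?_, fun U V _ _ => ?_⟩
  · refine ⟨vanishingSubmodule Uᶜ, rfl, isClosed_vanishingSubmodule _, fun a ha b => ⟨?_, ?_⟩⟩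
    · intro x hx
      simp [ha x hx]
    · intro x hx
      simp [ha x hx]
  · refine ⟨fun hUV f hf x hx => hf x fun hxU => hx (hUV hxU), fun h x hx => ?_⟩
    obtain ⟨f, hfx, hf⟩ := exists_apply_eq_one_of_mem_isOpen hU hx
    by_contra hxV
    exact one_ne_zero (hfx.symm.trans (h hf x hxV))
  · refine ⟨⋃ g ∈ L, {x | g x ≠ 0}, isOpen_biUnion fun g _ =>
      isOpen_ne_fun (map_continuous g) continuous_const, Set.Subset.antisymm ?_ ?_⟩
    · intro f hf x hx
      by_contra hfx
      exact hx (Set.mem_biUnion hf hfx)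
    · intro f hf
      exact mem_of_forall_eq_zero hLc hL fun x hx => hf x (by simpa using hx)
  · ext f
    simp only [Set.compl_inter, Set.mem_union, Set.mem_inter_iff, Set.mem_ofPred_eq, or_imp,
      forall_and]
end

section
/- Let A be a C*-algebra and let K(A) be the linear span of K(A)₊. Then K(A) is a dense two-sided ideal of A which is hereditary (if 0 ≤ x ≤ y with y ∈ K(A) then x ∈ K(A)) and which is minimal among dense two-sided ideals: for every dense two-sided ideal I of A one has K(A) ⊆ I. -/
section Riesz

open Filter Topology

variable {A : Type*} [NonUnitalCStarAlgebra A] [PartialOrder A] [StarOrderedRing A]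

lemma norm_mul_le_norm_mul_of_star_mul_self_le {p q : A} (h : star p * p ≤ star q * q) (w : A) :
    ‖p * w‖ ≤ ‖q * w‖ := by
  have key : star (p * w) * (p * w) ≤ star (q * w) * (q * w) := by
    simpa only [star_mul, mul_assoc] using star_left_conjugate_le_conjugate h w
  have := CStarAlgebra.norm_le_norm_of_nonneg_of_le (star_mul_self_nonneg _) key
  rw [CStarRing.norm_star_mul_self, CStarRing.norm_star_mul_self] at this
  exact le_of_sq_le_sq (by simpa only [sq] using this) (norm_nonneg _)

lemma norm_sub_mul_le_norm_sub_mul_of_star_mul_self_le {p q : A}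
    (h : star p * p ≤ star q * q) (w : A) : ‖p - p * w‖ ≤ ‖q - q * w‖ := by
  have key : star (p - p * w) * (p - p * w) ≤ star (q - q * w) * (q - q * w) := by
    obtain ⟨z, hz⟩ := CStarAlgebra.nonneg_iff_eq_star_mul_self.mp (sub_nonneg.mpr h)
    have expand (r : A) : star (r - r * w) * (r - r * w) =
        star r * r - star w * (star r * r) - star r * r * w + star w * (star r * r) * w := by
      simp only [star_sub, star_mul]
      noncomm_ring
    rw [← sub_nonneg]
    convert star_mul_self_nonneg (z - z * w) using 1
    rw [expand, expand, expand, ← hz]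
    noncomm_ring
  have := CStarAlgebra.norm_le_norm_of_nonneg_of_le (star_mul_self_nonneg _) key
  rw [CStarRing.norm_star_mul_self, CStarRing.norm_star_mul_self] at this
  exact le_of_sq_le_sq (by simpa only [sq] using this) (norm_nonneg _)

/-- A continuous approximation of `t ↦ 1 / √t` on `[0, ∞)`, vanishing at `0`. -/
noncomputable def truncatedInvSqrt (ε t : ℝ) : ℝ := √t / max t ε

lemma continuous_truncatedInvSqrt {ε : ℝ} (hε : 0 < ε) : Continuous (truncatedInvSqrt ε) :=
  Real.continuous_sqrt.div₀ (by fun_prop) fun t ↦ (lt_max_of_lt_right hε).ne'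

lemma truncatedInvSqrt_zero (ε : ℝ) : truncatedInvSqrt ε 0 = 0 := by
  simp [truncatedInvSqrt]

lemma abs_mul_truncatedInvSqrt_sub_sqrt_le {ε t : ℝ} (hε : 0 < ε) (ht : 0 ≤ t) :
    |t * truncatedInvSqrt ε t - √t| ≤ √ε := by
  rcases le_or_gt ε t with h | h
  · have h0 : t ≠ 0 := by linarith
    rw [truncatedInvSqrt, max_eq_left h, mul_div_cancel₀ _ h0]
    simp
  · have h1 : √t ≤ √ε := Real.sqrt_le_sqrt h.le
    have h2 : 0 ≤ √t := Real.sqrt_nonneg t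
    have h3 : t * (√t / ε) ≤ √t := by
      rw [mul_div_left_comm]
      exact mul_le_of_le_one_right h2 ((div_le_one hε).2 h.le)
    have h4 : 0 ≤ t * (√t / ε) := by positivity
    rw [truncatedInvSqrt, max_eq_right h.le, abs_le]
    constructor <;> linarith

lemma abs_sqrt_sub_mul_truncatedInvSqrt_sq_le {ε t : ℝ} (hε : 0 < ε) (ht : 0 ≤ t) :
    |√t - √t * (truncatedInvSqrt ε t * t * truncatedInvSqrt ε t)| ≤ √ε := by
  rcases le_or_gt ε t with h | h
  · have h0 : t ≠ 0 := by linarith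
    have : truncatedInvSqrt ε t * t * truncatedInvSqrt ε t = 1 := by
      rw [truncatedInvSqrt, max_eq_left h]
      field_simp
      exact Real.sq_sqrt ht
    rw [this]
    simp
  · have h1 : √t ≤ √ε := Real.sqrt_le_sqrt h.le
    have h2 : 0 ≤ √t := Real.sqrt_nonneg t
    have h3 : truncatedInvSqrt ε t * t * truncatedInvSqrt ε t = (t / ε) ^ 2 := by
      rw [truncatedInvSqrt, max_eq_right h.le]
      field_simp
      rw [Real.sq_sqrt ht, sq]
    have h5 : (t / ε) ^ 2 ≤ 1 := pow_le_one₀ (by positivity) ((div_le_one hε).2 h.le)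
    have h6 : 0 ≤ (t / ε) ^ 2 := by positivity
    rw [h3, abs_le]
    constructor <;> nlinarith

lemma CFC.star_sqrt (a : A) : star (CFC.sqrt a) = CFC.sqrt a :=
  (CFC.sqrt_nonneg a).isSelfAdjoint.star_eq

lemma norm_sqrt_mul_cfc_mul_sqrt_le {x y c : A} (hx : 0 ≤ x) (hxy : x ≤ y) (hc : 0 ≤ c)
    (hcy : c ≤ y) {f : ℝ → ℝ} (hf : Continuous f) (hf0 : f 0 = 0) {C : ℝ}
    (hfC : ∀ t, 0 ≤ t → |t * f t| ≤ C) :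
    ‖CFC.sqrt x * cfcₙ f y * CFC.sqrt c‖ ≤ C := by
  have hy : 0 ≤ y := hx.trans hxy
  have star_cfc : star (cfcₙ f y) = cfcₙ f y := IsSelfAdjoint.cfcₙ.star_eq
  have sqrt_le {a : A} (ha : 0 ≤ a) (hay : a ≤ y) :
      star (CFC.sqrt a) * CFC.sqrt a ≤ star (CFC.sqrt y) * CFC.sqrt y := by
    rwa [CFC.star_sqrt, CFC.star_sqrt, CFC.sqrt_mul_sqrt_self a, CFC.sqrt_mul_sqrt_self y]
  calc ‖CFC.sqrt x * cfcₙ f y * CFC.sqrt c‖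
      ≤ ‖CFC.sqrt y * (cfcₙ f y * CFC.sqrt c)‖ := by
        rw [mul_assoc]
        exact norm_mul_le_norm_mul_of_star_mul_self_le (sqrt_le hx hxy) _
    _ = ‖CFC.sqrt c * (cfcₙ f y * CFC.sqrt y)‖ := by
        rw [← norm_star]
        simp only [star_mul, CFC.star_sqrt, star_cfc, mul_assoc]
    _ ≤ ‖CFC.sqrt y * (cfcₙ f y * CFC.sqrt y)‖ :=
        norm_mul_le_norm_mul_of_star_mul_self_le (sqrt_le hc hcy) _
    _ = ‖cfcₙ (fun t ↦ √t * (f t * √t)) y‖ := by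
        rw [CFC.sqrt_eq_real_sqrt y, cfcₙ_mul _ _ y, cfcₙ_mul _ _ y]
    _ ≤ C := by
        refine norm_cfcₙ_le fun t ht ↦ ?_
        have ht0 := quasispectrum_nonneg_of_nonneg y hy t ht
        have : √t * (f t * √t) = t * f t := by
          rw [mul_left_comm, Real.mul_self_sqrt ht0, mul_comm]
        rw [this]
        exact hfC t ht0

/-- **Riesz decomposition** in C⋆-algebras: if `0 ≤ x ≤ ∑ k, y k`, then `x = ∑ k, u k * (u k)⋆`
with `u k` in the closure of `A * √(y k)`; in particular right units for `√(y k)` are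
right units for `u k`. -/
lemma exists_eq_sum_mul_star_of_le_sum {ι : Type*} [Fintype ι] {x : A} {y : ι → A} (hx : 0 ≤ x)
    (hy : ∀ k, 0 ≤ y k) (hxy : x ≤ ∑ k, y k) :
    ∃ u : ι → A, x = ∑ k, u k * star (u k) ∧
      ∀ k e, CFC.sqrt (y k) * e = CFC.sqrt (y k) → u k * e = u k := by
  set s := ∑ k, y k with hs
  have hs0 : 0 ≤ s := hx.trans hxy
  let ε : ℕ → ℝ := fun n ↦ 1 / ((n : ℝ) + 1)
  have hε (n) : 0 < ε n := Nat.one_div_pos_of_nat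
  have hε_lim : Tendsto (fun n ↦ √(ε n)) atTop (𝓝 0) := by
    simpa only [Real.sqrt_zero, Function.comp_def] using
      (Real.continuous_sqrt.tendsto 0).comp (tendsto_one_div_add_atTop_nhds_zero_nat (𝕜 := ℝ))
  let G : ℕ → A := fun n ↦ cfcₙ (truncatedInvSqrt (ε n)) s
  have hcont (n) : Continuous (truncatedInvSqrt (ε n)) := continuous_truncatedInvSqrt (hε n)
  have hzero (n) := truncatedInvSqrt_zero (ε n)
  let v : ι → ℕ → A := fun k n ↦ CFC.sqrt x * G n * CFC.sqrt (y k)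
  have hv (k) : CauchySeq (v k) := by
    refine cauchySeq_of_le_tendsto_0 (fun n ↦ 2 * √(ε n)) (fun n m N hn hm ↦ ?_)
      (by simpa using hε_lim.const_mul 2)
    have hle {i j : ℕ} (h : i ≤ j) : √(ε j) ≤ √(ε i) :=
      Real.sqrt_le_sqrt (Nat.one_div_le_one_div h)
    have : v k n - v k m = CFC.sqrt x *
        cfcₙ (fun t ↦ truncatedInvSqrt (ε n) t - truncatedInvSqrt (ε m) t) s *
        CFC.sqrt (y k) := by
      rw [cfcₙ_sub _ _ s (hcont n).continuousOn (hzero n) (hcont m).continuousOn (hzero m)]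
      simp only [v, G, mul_sub, sub_mul]
    rw [dist_eq_norm, this]
    refine norm_sqrt_mul_cfc_mul_sqrt_le hx hxy (hy k)
      (Finset.single_le_sum (fun i _ ↦ hy i) (Finset.mem_univ k))
      ((hcont n).sub (hcont m)) (by simp [hzero]) fun t ht ↦ ?_
    have h1 := abs_mul_truncatedInvSqrt_sub_sqrt_le (hε n) ht
    have h2 := abs_mul_truncatedInvSqrt_sub_sqrt_le (hε m) ht
    have h3 := hle hn
    have h4 := hle hm
    rw [Pi.sub_apply, mul_sub]
    rw [abs_le] at *
    constructor <;> linarith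
  choose u hu using fun k ↦ cauchySeq_tendsto_of_complete (hv k)
  refine ⟨u, ?_, fun k e he ↦ ?_⟩
  · have hlim : Tendsto (fun n ↦ ∑ k, v k n * star (v k n)) atTop (𝓝 (∑ k, u k * star (u k))) :=
      tendsto_finsetSum _ fun k _ ↦ (hu k).mul (hu k).star
    refine tendsto_nhds_unique ?_ hlim
    have hsum (n) : ∑ k, v k n * star (v k n) =
        CFC.sqrt x * (G n * s * G n) * CFC.sqrt x := by
      have star_G : star (G n) = G n := IsSelfAdjoint.cfcₙ.star_eq
      have hterm (k) : v k n * star (v k n) = CFC.sqrt x * (G n * y k * G n) * CFC.sqrt x := by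
        have hk := CFC.sqrt_mul_sqrt_self (y k) (hy k)
        calc v k n * star (v k n) = CFC.sqrt x * (G n * (CFC.sqrt (y k) * CFC.sqrt (y k)) * G n) *
              CFC.sqrt x := by
              simp only [v, star_mul, CFC.star_sqrt, star_G, mul_assoc]
          _ = _ := by rw [hk]
      simp only [hterm, hs, Finset.mul_sum, Finset.sum_mul]
    have hGsG (n) : G n * s * G n = cfcₙ (fun t ↦ truncatedInvSqrt (ε n) t * t *
        truncatedInvSqrt (ε n) t) s := by
      have h1 := cfcₙ_mul (truncatedInvSqrt (ε n)) (fun t ↦ t) s (hcont n).continuousOn (hzero n)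
        continuousOn_id rfl
      have h2 := cfcₙ_mul (fun t ↦ truncatedInvSqrt (ε n) t * t) (truncatedInvSqrt (ε n)) s
        ((hcont n).mul continuous_id).continuousOn (by simp) (hcont n).continuousOn (hzero n)
      rw [h2, h1, cfcₙ_id' ℝ s]
    rw [tendsto_iff_norm_sub_tendsto_zero]
    refine squeeze_zero (g := fun n ↦ √(ε n) * ‖CFC.sqrt x‖) (fun _ ↦ norm_nonneg _) (fun n ↦ ?_)
      (by simpa using hε_lim.mul_const ‖CFC.sqrt x‖)
    have hdiff : ‖CFC.sqrt x - CFC.sqrt x * (G n * s * G n)‖ ≤ √(ε n) := by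
      refine (norm_sub_mul_le_norm_sub_mul_of_star_mul_self_le (q := CFC.sqrt s) ?_ _).trans ?_
      · rwa [CFC.star_sqrt, CFC.star_sqrt, CFC.sqrt_mul_sqrt_self x, CFC.sqrt_mul_sqrt_self s]
      · have hc : Continuous fun t ↦ truncatedInvSqrt (ε n) t * t * truncatedInvSqrt (ε n) t :=
          ((hcont n).mul continuous_id).mul (hcont n)
        rw [hGsG, CFC.sqrt_eq_real_sqrt s, ← cfcₙ_mul _ _ s Real.continuous_sqrt.continuousOn
          (by simp) hc.continuousOn (by simp), ← cfcₙ_sub Real.sqrt (fun t ↦ √t * _) s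
          Real.continuous_sqrt.continuousOn (by simp) (Real.continuous_sqrt.mul hc).continuousOn (by simp)]
        exact norm_cfcₙ_le fun t ht ↦ abs_sqrt_sub_mul_truncatedInvSqrt_sq_le (hε n)
          (quasispectrum_nonneg_of_nonneg s hs0 t ht)
    calc ‖∑ k, v k n * star (v k n) - x‖
        = ‖(CFC.sqrt x - CFC.sqrt x * (G n * s * G n)) * CFC.sqrt x‖ := by
          rw [hsum, sub_mul, CFC.sqrt_mul_sqrt_self x, norm_sub_rev]
      _ ≤ _ := (norm_mul_le _ _).trans (by gcongr)
  · refine tendsto_nhds_unique ((hu k).mul_const e) ?_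
    have : (fun n ↦ v k n * e) = v k := by
      funext n
      simp only [v, mul_assoc, he]
    rw [this]
    exact hu k

end Riesz

section Pedersen

/-- Continuous functions with compact support contained in `(0, ∞)`. -/
def IsCutoff (φ : ℝ → ℝ) : Prop :=
  Continuous φ ∧ HasCompactSupport φ ∧ tsupport φ ⊆ Set.Ioi 0

namespace IsCutoff

variable {φ : ℝ → ℝ}

lemma zero (hφ : IsCutoff φ) : φ 0 = 0 :=
  image_eq_zero_of_notMem_tsupport fun h ↦ lt_irrefl (0 : ℝ) (hφ.2.2 h)

lemma of_support_subset (hφ : IsCutoff φ) {f : ℝ → ℝ} (hf : Continuous f)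
    (h : ∀ t, φ t = 0 → f t = 0) : IsCutoff f := by
  have hsupp : tsupport f ⊆ tsupport φ :=
    closure_mono fun t ht ↦ fun h0 ↦ ht (h t h0)
  exact ⟨hf, hφ.2.1.of_isClosed_subset (isClosed_tsupport f) hsupp, hsupp.trans hφ.2.2⟩

lemma exists_eq_one (hφ : IsCutoff φ) : ∃ ψ, IsCutoff ψ ∧ ∀ t, φ t ≠ 0 → ψ t = 1 := by
  obtain ⟨f, hf1, hfc, hfs, -⟩ :=
    exists_continuousMap_one_of_isCompact_subset_isOpen hφ.2.1 isOpen_Ioi hφ.2.2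
  exact ⟨f, ⟨f.continuous, hfc, hfs⟩, fun t ht ↦ hf1 (subset_tsupport φ ht)⟩

end IsCutoff

lemma isCutoff_trapezoid {ε : ℝ} (hε : 0 < ε) (C : ℝ) :
    IsCutoff fun t ↦ max 0 (min (t - ε) (C - t)) := by
  have hsupp : tsupport (fun t ↦ max 0 (min (t - ε) (C - t))) ⊆ Set.Icc ε C := by
    refine closure_minimal (fun t ht ↦ ?_) isClosed_Icc
    by_contra h
    refine ht (max_eq_left ?_)
    rw [Set.mem_Icc, not_and_or, not_le, not_le] at h
    rcases h with h | h
    · exact (min_le_left _ _).trans (by linarith)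
    · exact (min_le_right _ _).trans (by linarith)
  exact ⟨by fun_prop, isCompact_Icc.of_isClosed_subset (isClosed_tsupport _) hsupp,
    fun t ht ↦ hε.trans_le (hsupp ht).1⟩

variable (A : Type*) [NonUnitalCStarAlgebra A] [PartialOrder A]

/-- The set `K(A)₀` of elements `φ(a)` with `a` positive and `φ` continuous with compact support
contained in `(0, ∞)`. -/
def pedersenGenerators : Set A :=
  {x : A | ∃ a : A, 0 ≤ a ∧ ∃ φ : ℝ → ℝ, Continuous φ ∧ HasCompactSupport φ ∧
      tsupport φ ⊆ Set.Ioi (0 : ℝ) ∧ x = cfcₙ φ a}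

/-- The set `K(A)₊` of positive elements dominated by a finite sum of elements of `K(A)₀`. -/
def pedersenCone : Set A :=
  {x : A | 0 ≤ x ∧ ∃ (n : ℕ) (y : Fin n → A), (∀ j, y j ∈ pedersenGenerators A) ∧ x ≤ ∑ j, y j}

variable {A}

lemma IsCutoff.cfcₙ_mem {φ : ℝ → ℝ} (hφ : IsCutoff φ) {a : A} (ha : 0 ≤ a) :
    cfcₙ φ a ∈ pedersenGenerators A :=
  ⟨a, ha, φ, hφ.1, hφ.2.1, hφ.2.2, rfl⟩

namespace pedersenCone

lemma of_le {x y : A} (hx : 0 ≤ x) (hxy : x ≤ y) (hy : y ∈ pedersenCone A) :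
    x ∈ pedersenCone A := by
  obtain ⟨-, n, z, hz, h⟩ := hy
  exact ⟨hx, n, z, hz, hxy.trans h⟩

lemma of_generator {x : A} (hx : 0 ≤ x) (h : x ∈ pedersenGenerators A) : x ∈ pedersenCone A :=
  ⟨hx, 1, fun _ ↦ x, fun _ ↦ h, by simp⟩

lemma zero_mem : (0 : A) ∈ pedersenCone A :=
  ⟨le_rfl, 0, Fin.elim0, fun j ↦ j.elim0, by simp⟩

end pedersenCone

namespace pedersenGenerators

lemma exists_cutoff {x : A} (hx : x ∈ pedersenGenerators A) :
    ∃ a, 0 ≤ a ∧ ∃ φ, IsCutoff φ ∧ x = cfcₙ φ a := by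
  obtain ⟨a, ha, φ, h1, h2, h3, rfl⟩ := hx
  exact ⟨a, ha, φ, ⟨h1, h2, h3⟩, rfl⟩

lemma isSelfAdjoint {x : A} (hx : x ∈ pedersenGenerators A) : IsSelfAdjoint x := by
  obtain ⟨a, -, φ, -, rfl⟩ := exists_cutoff hx
  exact IsSelfAdjoint.cfcₙ

lemma smul_mem {x : A} (hx : x ∈ pedersenGenerators A) (r : ℝ) :
    r • x ∈ pedersenGenerators A := by
  obtain ⟨a, ha, φ, hφ, rfl⟩ := exists_cutoff hx
  rw [← cfcₙ_const_mul r φ a hφ.1.continuousOn hφ.zero]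
  exact (hφ.of_support_subset (hφ.1.const_mul r) fun t ht ↦ by simp [ht]).cfcₙ_mem ha

lemma mul_self_mem {x : A} (hx : x ∈ pedersenGenerators A) : x * x ∈ pedersenGenerators A := by
  obtain ⟨a, ha, φ, hφ, rfl⟩ := exists_cutoff hx
  rw [← cfcₙ_mul φ φ a hφ.1.continuousOn hφ.zero hφ.1.continuousOn hφ.zero]
  exact (hφ.of_support_subset (hφ.1.mul hφ.1) fun t ht ↦ by simp [ht]).cfcₙ_mem ha

lemma exists_mul_eq_self {x : A} (hx : x ∈ pedersenGenerators A) : ∃ e : A, x * e = x := by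
  obtain ⟨a, ha, φ, hφ, rfl⟩ := exists_cutoff hx
  obtain ⟨ψ, hψ, h1⟩ := hφ.exists_eq_one
  refine ⟨cfcₙ ψ a, ?_⟩
  rw [← cfcₙ_mul _ _ a hφ.1.continuousOn hφ.zero hψ.1.continuousOn hψ.zero]
  congr! 2 with t
  by_cases h : φ t = 0
  · simp [h]
  · simp [h1 t h]

end pedersenGenerators

lemma exists_add_add_mul_eq_zero_of_norm_lt_one {B : Type*} [NonUnitalCStarAlgebra B] {x : B}
    (hx : ‖x‖ < 1) : ∃ w : B, w + x + x * w = 0 := by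
  have h : IsUnit (1 + (x : Unitization ℂ B)) := by
    simpa using isUnit_one_sub_of_norm_lt_one (x := -(x : Unitization ℂ B))
      (by simpa [Unitization.norm_inr] using hx)
  obtain ⟨w, hw, -⟩ := isQuasiregular_iff.mp ((isQuasiregular_iff_isUnit' ℂ).mpr h)
  exact ⟨w, hw⟩

lemma pedersenGenerators_subset_of_dense {I : Submodule ℂ A}
    (hI : ∀ a ∈ I, ∀ b : A, a * b ∈ I ∧ b * a ∈ I) (hd : Dense (I : Set A)) :
    pedersenGenerators A ⊆ I := by
  intro x hx
  obtain ⟨e, he⟩ := pedersenGenerators.exists_mul_eq_self hx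
  obtain ⟨y, hy, hye⟩ := hd.exists_dist_lt e one_pos
  rw [dist_eq_norm, norm_sub_rev] at hye
  obtain ⟨w, hw⟩ := exists_add_add_mul_eq_zero_of_norm_lt_one hye
  have hxy : x * y ∈ I := (hI y hy x).2
  have : x = x * y + x * y * w := by
    have h := congrArg (x * ·) hw
    simp only [mul_add, mul_sub, sub_mul, mul_zero, he, ← mul_assoc] at h
    rw [← sub_eq_zero, ← neg_eq_zero, ← h]
    abel
  rw [this]
  exact I.add_mem hxy (hI _ hxy w).1

variable [StarOrderedRing A]

namespace pedersenGenerators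

/-- Every generator is dominated by a positive element whose square root has a generator
as right unit. -/
lemma exists_le_nonneg {x : A} (hx : x ∈ pedersenGenerators A) :
    ∃ y, 0 ≤ y ∧ x ≤ y ∧ ∃ e ∈ pedersenGenerators A, CFC.sqrt y * e = CFC.sqrt y := by
  obtain ⟨a, ha, φ, hφ, rfl⟩ := exists_cutoff hx
  obtain ⟨ψ, hψ, h1⟩ := hφ.exists_eq_one
  have hcont : Continuous fun t ↦ √|φ t| := Real.continuous_sqrt.comp hφ.1.abs
  have hzero : √|φ 0| = 0 := by simp [hφ.zero]
  have hsq : cfcₙ (fun t ↦ √|φ t|) a * cfcₙ (fun t ↦ √|φ t|) a = cfcₙ (fun t ↦ |φ t|) a := by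
    rw [← cfcₙ_mul _ _ a hcont.continuousOn hzero hcont.continuousOn hzero]
    simp only [Real.mul_self_sqrt (abs_nonneg _)]
  have hy : 0 ≤ cfcₙ (fun t ↦ |φ t|) a := cfcₙ_nonneg fun _ _ ↦ abs_nonneg _
  have hsqrt : CFC.sqrt (cfcₙ (fun t ↦ |φ t|) a) = cfcₙ (fun t ↦ √|φ t|) a :=
    CFC.sqrt_unique hsq (cfcₙ_nonneg fun _ _ ↦ Real.sqrt_nonneg _)
  refine ⟨_, hy, cfcₙ_mono (fun t _ ↦ le_abs_self _) hφ.1.continuousOn hφ.1.abs.continuousOn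
    hφ.zero (by simp [hφ.zero]), _, hψ.cfcₙ_mem ha, ?_⟩
  rw [hsqrt, ← cfcₙ_mul _ _ a hcont.continuousOn hzero hψ.1.continuousOn hψ.zero]
  congr! 2 with t
  by_cases h : φ t = 0
  · simp [h]
  · simp [h1 t h]

end pedersenGenerators

namespace pedersenCone

lemma add_mem {x y : A} (hx : x ∈ pedersenCone A) (hy : y ∈ pedersenCone A) :
    x + y ∈ pedersenCone A := by
  obtain ⟨hx0, n, z, hz, hxz⟩ := hx
  obtain ⟨hy0, m, w, hw, hyw⟩ := hy
  refine ⟨add_nonneg hx0 hy0, n + m, Fin.append z w, fun j ↦ ?_, ?_⟩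
  · induction j using Fin.addCases with
    | left i => simpa using hz i
    | right i => simpa using hw i
  · simpa [Fin.sum_univ_add] using add_le_add hxz hyw

lemma smul_mem {x : A} (hx : x ∈ pedersenCone A) {r : ℝ} (hr : 0 ≤ r) :
    r • x ∈ pedersenCone A := by
  obtain ⟨hx0, n, z, hz, hxz⟩ := hx
  refine ⟨smul_nonneg hr hx0, n, fun j ↦ r • z j,
    fun j ↦ pedersenGenerators.smul_mem (hz j) r, ?_⟩
  rw [← Finset.smul_sum]
  exact smul_le_smul_of_nonneg_left hxz hr

lemma exists_eq_sum_mul_star {x : A} (hx : x ∈ pedersenCone A) :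
    ∃ (n : ℕ) (u e : Fin n → A), (∀ k, e k ∈ pedersenGenerators A) ∧
      (∀ k, u k * e k = u k) ∧ x = ∑ k, u k * star (u k) := by
  obtain ⟨hx0, n, z, hz, hxz⟩ := hx
  choose y hy hzy e he hye using fun k ↦ pedersenGenerators.exists_le_nonneg (hz k)
  obtain ⟨u, hu, hue⟩ := exists_eq_sum_mul_star_of_le_sum hx0 hy
    (hxz.trans (Finset.sum_le_sum fun k _ ↦ hzy k))
  exact ⟨n, u, e, he, fun k ↦ hue k _ (hye k), hu⟩

open Unitization in
lemma exists_inr_eq_unitary_conjugate {e : A} (he : e ∈ pedersenGenerators A) (he0 : 0 ≤ e)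
    (u : unitary (Unitization ℂ A)) :
    ∃ m ∈ pedersenCone A, star (u : Unitization ℂ A) * e * u = (m : Unitization ℂ A) := by
  obtain ⟨a, ha, φ, hφ, rfl⟩ := pedersenGenerators.exists_cutoff he
  obtain ⟨b, hb⟩ : ∃ b : A, star (u : Unitization ℂ A) * a * u = (b : Unitization ℂ A) :=
    ⟨(star (u : Unitization ℂ A) * a * u).snd, Unitization.ext (by simp) (by simp)⟩
  have hb0 : 0 ≤ b := by
    rw [← inr_nonneg_iff, ← hb]
    exact star_left_conjugate_nonneg (inr_nonneg_iff.mpr ha) _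
  have hm : star (u : Unitization ℂ A) * (cfcₙ φ a : A) * u =
      ((cfcₙ φ b : A) : Unitization ℂ A) := by
    have hσ (x : Unitization ℂ A) : Unitary.conjStarAlgAut ℂ (Unitization ℂ A) (star u) x =
        star (u : Unitization ℂ A) * x * u := Unitary.conjStarAlgAut_star_apply u x
    have ha' : IsSelfAdjoint (a : Unitization ℂ A) := ha.isSelfAdjoint.inr ℂ
    rw [real_cfcₙ_eq_cfc_inr a φ hφ.zero, real_cfcₙ_eq_cfc_inr b φ hφ.zero, ← hb, ← hσ, ← hσ]
    refine StarAlgHomClass.map_cfc (S := ℂ) (Unitary.conjStarAlgAut ℂ (Unitization ℂ A) (star u))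
      φ (a : Unitization ℂ A) hφ.1.continuousOn ?_ ha' (ha'.map _)
    simp only [funext hσ]
    fun_prop
  refine ⟨_, of_generator ?_ (hφ.cfcₙ_mem hb0), hm⟩
  rw [← inr_nonneg_iff, ← hm]
  exact star_left_conjugate_nonneg (inr_nonneg_iff.mpr he0) _

open Unitization in
lemma exists_conjugate_le_inr {e : A} (he : e ∈ pedersenGenerators A) (he0 : 0 ≤ e)
    (c : Unitization ℂ A) :
    ∃ m ∈ pedersenCone A, star c * e * c ≤ (m : Unitization ℂ A) := by
  have hc : c ∈ Submodule.span ℂ (unitary (Unitization ℂ A) : Set (Unitization ℂ A)) := by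
    rw [CStarAlgebra.span_unitary]
    trivial
  induction hc using Submodule.span_induction with
  | mem u hu =>
    obtain ⟨m, hm, h⟩ := exists_inr_eq_unitary_conjugate he he0 ⟨u, hu⟩
    exact ⟨m, hm, h.le⟩
  | zero => exact ⟨0, zero_mem, by simp⟩
  | add c d _ _ hc hd =>
    obtain ⟨m, hm, hcm⟩ := hc
    obtain ⟨n, hn, hdn⟩ := hd
    refine ⟨(m + n) + (m + n), add_mem (add_mem hm hn) (add_mem hm hn), ?_⟩
    have hdiff : 0 ≤ star (c - d) * e * (c - d) :=
      star_left_conjugate_nonneg (inr_nonneg_iff.mpr he0) _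
    have hsplit : star (c + d) * e * (c + d) + star (c - d) * e * (c - d) =
        (star c * e * c + star d * e * d) + (star c * e * c + star d * e * d) := by
      simp only [star_add, star_sub]
      noncomm_ring
    calc star (c + d) * e * (c + d)
        ≤ star (c + d) * e * (c + d) + star (c - d) * e * (c - d) := le_add_of_nonneg_right hdiff
      _ ≤ ((m : Unitization ℂ A) + n) + (m + n) := by rw [hsplit]; gcongr
      _ = _ := by simp
  | smul r c _ hc =>
    obtain ⟨m, hm, hcm⟩ := hc
    refine ⟨(‖r‖ ^ 2) • m, smul_mem hm (by positivity), ?_⟩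
    have : star (r • c) * e * (r • c) = (‖r‖ ^ 2) • (star c * e * c) := by
      rw [star_smul, smul_mul_assoc, smul_mul_assoc, mul_smul_comm, smul_smul,
        ← Complex.coe_smul, Complex.star_def, mul_comm, Complex.mul_conj, Complex.normSq_eq_norm_sq]
    rw [this, inr_smul]
    exact smul_le_smul_of_nonneg_left hcm (by positivity)

lemma conjugate_mem {e : A} (he : e ∈ pedersenGenerators A) (he0 : 0 ≤ e) (c : A) :
    star c * e * c ∈ pedersenCone A := by
  obtain ⟨m, hm, h⟩ := exists_conjugate_le_inr he he0 c
  have hc0 : 0 ≤ star c * e * c := star_left_conjugate_nonneg he0 c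
  refine of_le hc0 ?_ hm
  rw [← Unitization.inr_le_iff _ _ hc0.isSelfAdjoint hm.1.isSelfAdjoint]
  simpa using h

lemma star_mul_mul_mem_span {e : A} (he : e ∈ pedersenGenerators A) (he0 : 0 ≤ e) (c d : A) :
    star c * e * d ∈ Submodule.span ℂ (pedersenCone A) := by
  have hq (z : A) : star z * e * z ∈ Submodule.span ℂ (pedersenCone A) :=
    Submodule.subset_span (conjugate_mem he he0 z)
  have polarization : star c * e * d = (4⁻¹ : ℂ) • (star (c + d) * e * (c + d)
      - star (c - d) * e * (c - d)
      - Complex.I • (star (c + Complex.I • d) * e * (c + Complex.I • d))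
      + Complex.I • (star (c - Complex.I • d) * e * (c - Complex.I • d))) := by
    simp only [star_add, star_sub, star_smul, add_mul, mul_add, sub_mul, mul_sub, smul_mul_assoc,
      mul_smul_comm, smul_add, smul_sub, smul_smul, Complex.star_def, Complex.conj_I,
      Complex.I_mul_I, mul_neg, mul_one, mul_assoc]
    module
  rw [polarization]
  exact Submodule.smul_mem _ _ (Submodule.add_mem _ (Submodule.sub_mem _ (Submodule.sub_mem _
    (hq _) (hq _)) (Submodule.smul_mem _ _ (hq _))) (Submodule.smul_mem _ _ (hq _)))

lemma mul_mem_span {x : A} (hx : x ∈ pedersenCone A) (b : A) :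
    x * b ∈ Submodule.span ℂ (pedersenCone A) ∧ b * x ∈ Submodule.span ℂ (pedersenCone A) := by
  obtain ⟨n, u, e, he, hue, rfl⟩ := exists_eq_sum_mul_star hx
  have hterm (k) : u k * star (u k) = u k * (e k * e k) * star (u k) := by
    rw [← mul_assoc (u k), hue, hue]
  have he0 (k) : 0 ≤ e k * e k := (pedersenGenerators.isSelfAdjoint (he k)).mul_self_nonneg
  rw [Finset.sum_mul, Finset.mul_sum]
  constructor <;> refine Submodule.sum_mem _ fun k _ ↦ ?_ <;> rw [hterm]
  · simpa only [star_star, mul_assoc] using star_mul_mul_mem_span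
      (pedersenGenerators.mul_self_mem (he k)) (he0 k) (star (u k)) (star (u k) * b)
  · simpa only [star_star, star_mul, mul_assoc] using star_mul_mul_mem_span
      (pedersenGenerators.mul_self_mem (he k)) (he0 k) (star (b * u k)) (star (u k))

lemma exists_add_star_le {k : A} (hk : k ∈ Submodule.span ℂ (pedersenCone A)) (r : ℂ) :
    ∃ m ∈ pedersenCone A, r • k + star (r • k) ≤ m := by
  induction hk using Submodule.span_induction generalizing r with
  | mem x hx =>
    refine ⟨(2 * ‖r‖) • x, smul_mem hx (by positivity), ?_⟩
    have : r • x + star (r • x) = (2 * r.re) • x := by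
      rw [star_smul, hx.1.isSelfAdjoint.star_eq, ← add_smul, ← Complex.coe_smul, Complex.star_def,
        Complex.add_conj]
    rw [this]
    exact smul_le_smul_of_nonneg_right (by linarith [Complex.re_le_norm r]) hx.1
  | zero => exact ⟨0, zero_mem, by simp⟩
  | add x y _ _ hx hy =>
    obtain ⟨m, hm, hxm⟩ := hx r
    obtain ⟨n, hn, hyn⟩ := hy r
    refine ⟨m + n, add_mem hm hn, ?_⟩
    rw [smul_add, star_add, add_add_add_comm]
    exact add_le_add hxm hyn
  | smul s x _ hx => simpa only [smul_smul] using hx (r * s)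

lemma mem_of_nonneg_of_mem_span {y : A} (hy : 0 ≤ y)
    (h : y ∈ Submodule.span ℂ (pedersenCone A)) : y ∈ pedersenCone A := by
  obtain ⟨m, hm, hle⟩ := exists_add_star_le h 1
  rw [one_smul, hy.isSelfAdjoint.star_eq] at hle
  exact of_le hy ((le_add_of_nonneg_right hy).trans hle) hm

lemma dense_span : Dense (Submodule.span ℂ (pedersenCone A) : Set A) := by
  rw [Submodule.dense_iff_topologicalClosure_eq_top, eq_top_iff, ← CStarAlgebra.span_nonneg,
    Submodule.span_le]
  intro a ha
  change a ∈ closure _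
  refine Metric.mem_closure_iff.mpr fun ε hε ↦ ?_
  let φ : ℝ → ℝ := fun t ↦ max 0 (min (t - ε / 2) (2 * ‖a‖ - t))
  have hφ : IsCutoff φ := isCutoff_trapezoid (half_pos hε) _
  refine ⟨cfcₙ φ a, Submodule.subset_span (of_generator
    (cfcₙ_nonneg fun t _ ↦ le_max_left _ _) (hφ.cfcₙ_mem ha)), ?_⟩
  have hid : a = cfcₙ (fun t : ℝ ↦ t) a := (cfcₙ_id' ℝ a ha.isSelfAdjoint).symm
  refine lt_of_le_of_lt ?_ (half_lt_self hε)
  rw [dist_eq_norm]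
  nth_rw 1 [hid]
  rw [← cfcₙ_sub (fun t ↦ t) φ a continuousOn_id rfl hφ.1.continuousOn hφ.zero]
  refine norm_cfcₙ_le fun t ht ↦ ?_
  have ht0 : 0 ≤ t := quasispectrum_nonneg_of_nonneg a ha t ht
  have hta : t ≤ ‖a‖ := (le_abs_self t).trans
    (NonUnitalIsometricContinuousFunctionalCalculus.norm_quasispectrum_le a ht ha.isSelfAdjoint)
  have hφt : φ t = max 0 (t - ε / 2) := by
    simp only [φ]
    rw [min_eq_left (by linarith)]
  rw [hφt, Real.norm_eq_abs, abs_le]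
  rcases max_cases 0 (t - ε / 2) with ⟨h, _⟩ | ⟨h, _⟩ <;> rw [h] <;> constructor <;> linarith

end pedersenCone

lemma span_pedersenCone_le_of_dense {I : Submodule ℂ A}
    (hI : ∀ a ∈ I, ∀ b : A, a * b ∈ I ∧ b * a ∈ I) (hd : Dense (I : Set A)) :
    Submodule.span ℂ (pedersenCone A) ≤ I := by
  refine Submodule.span_le.mpr fun x hx ↦ ?_
  obtain ⟨n, u, e, he, hue, rfl⟩ := pedersenCone.exists_eq_sum_mul_star hx
  refine Submodule.sum_mem _ fun k _ ↦ (hI _ ?_ _).1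
  rw [← hue k]
  exact (hI _ (pedersenGenerators_subset_of_dense hI hd (he k)) _).2

end Pedersen

/-- The Pedersen ideal `K(A)`, the `ℂ`-linear span of `K(A)₊`, is a dense
hereditary two-sided ideal of the C*-algebra `A`, minimal among dense two-sided ideals. -/
theorem stmt3 (A : Type*) [NonUnitalCStarAlgebra A] [PartialOrder A] [StarOrderedRing A]
    (K₀ Kplus : Set A) (K : Submodule ℂ A)
    (hK₀ : K₀ = {x : A | ∃ a : A, 0 ≤ a ∧ ∃ φ : ℝ → ℝ, Continuous φ ∧ HasCompactSupport φ ∧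
      tsupport φ ⊆ Set.Ioi (0 : ℝ) ∧ x = cfcₙ φ a})
    (hKplus : Kplus = {x : A | 0 ≤ x ∧
      ∃ (n : ℕ) (y : Fin n → A), (∀ j, y j ∈ K₀) ∧ x ≤ ∑ j, y j})
    (hK : K = Submodule.span ℂ Kplus) :
    -- `K(A)` is a two-sided ideal
    (∀ a ∈ K, ∀ b : A, a * b ∈ K ∧ b * a ∈ K) ∧
    -- `K(A)` is dense
    Dense (K : Set A) ∧
    -- `K(A)` is hereditary
    (∀ x y : A, 0 ≤ x → x ≤ y → y ∈ K → x ∈ K) ∧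
    -- `K(A)` is minimal among dense two-sided ideals
    (∀ I : Submodule ℂ A, (∀ a ∈ I, ∀ b : A, a * b ∈ I ∧ b * a ∈ I) →
      Dense (I : Set A) → K ≤ I) := by
  subst hK hKplus hK₀
  change (∀ a ∈ Submodule.span ℂ (pedersenCone A), ∀ b : A,
      a * b ∈ Submodule.span ℂ (pedersenCone A) ∧ b * a ∈ Submodule.span ℂ (pedersenCone A)) ∧ _
  refine ⟨fun a ha b ↦ ?_, pedersenCone.dense_span, fun x y hx hxy hy ↦ ?_,
    fun I hI hd ↦ span_pedersenCone_le_of_dense hI hd⟩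
  · induction ha using Submodule.span_induction with
    | mem x hx => exact pedersenCone.mul_mem_span hx b
    | zero => simp
    | add x y _ _ hx hy =>
      rw [add_mul, mul_add]
      exact ⟨Submodule.add_mem _ hx.1 hy.1, Submodule.add_mem _ hx.2 hy.2⟩
    | smul r x _ hx =>
      rw [smul_mul_assoc, mul_smul_comm]
      exact ⟨Submodule.smul_mem _ r hx.1, Submodule.smul_mem _ r hx.2⟩
  · exact Submodule.subset_span (pedersenCone.of_le hx hxy
      (pedersenCone.mem_of_nonneg_of_mem_span (hx.trans hxy) hy))
end

section
/- Let A be a C*-algebra, Y a locally compact Hausdorff space, φ : C₀(Y) → M(A) a *-homomorphism into the multiplier algebra of A, and U ⊆ Y open. Let A_U be the closed linear span of { a·φ(f) | a ∈ A, f ∈ C₀(Y) with f vanishing on Y \ U } and let _U A be the closed linear span of { φ(f)·a | a ∈ A, f ∈ C₀(Y) with f vanishing on Y \ U }. Then (A_U)* = _U A, and the intersection _U A ∩ A_U is a hereditary C*-subalgebra of A: it is a closed *-subalgebra B such that whenever 0 ≤ x ≤ b with x ∈ A and b ∈ B, one has x ∈ B. -/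
open scoped ZeroAtInfty MultiplierAlgebra CStarAlgebra

/-- The right centralizer of a multiplier is a left module map. -/
theorem DoubleCentralizer.snd_mul_left {A : Type*} [NonUnitalCStarAlgebra A]
    (m : 𝓜(ℂ, A)) (x y : A) : m.snd (x * y) = x * m.snd y := by
  have h : (m.snd (x * y) - x * m.snd y) * star (m.snd (x * y) - x * m.snd y) = 0 := by
    rw [sub_mul, m.central, mul_assoc, mul_assoc, m.central, sub_self]
  exact sub_eq_zero.mp ((CStarRing.mul_star_self_eq_zero_iff _).mp h)

/-- A positive `b` compressed by `1 - c b`, where `c = b / (b² + r²)`, has norm at most `r`. -/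
theorem exists_mul_self_norm_compress_le {A : Type*} [NonUnitalCStarAlgebra A] [PartialOrder A]
    [StarOrderedRing A] {b : A} (hb : 0 ≤ b) {r : ℝ} (hr : 0 < r) :
    ∃ c : A, IsSelfAdjoint (c * b) ∧
      ‖b - c * b * b - (b - c * b * b) * (c * b)‖ ≤ r := by
  have hb' : IsSelfAdjoint b := .of_nonneg hb
  let k : ℝ → ℝ := fun t ↦ t / (t ^ 2 + r ^ 2)
  have hne : ∀ t : ℝ, t ^ 2 + r ^ 2 ≠ 0 := fun t ↦ by positivity
  have hk : Continuous k := by fun_prop (disch := exact hne _)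
  have hk0 : k 0 = 0 := by simp [k]
  have hcb : cfcₙ k b * b = cfcₙ (fun t ↦ k t * t) b := by
    rw [cfcₙ_mul k (fun t ↦ t) b, cfcₙ_id' ℝ b]
  refine ⟨cfcₙ k b, hcb ▸ cfcₙ_predicate _ b, ?_⟩
  have h₁ : b - cfcₙ k b * b * b = cfcₙ (fun t ↦ t - k t * t * t) b := by
    rw [cfcₙ_sub (fun t ↦ t) (fun t ↦ k t * t * t) b, cfcₙ_mul (fun t ↦ k t * t) (fun t ↦ t) b,
      cfcₙ_id' ℝ b, hcb]
  have h₂ : b - cfcₙ k b * b * b - (b - cfcₙ k b * b * b) * (cfcₙ k b * b) =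
      cfcₙ (fun t ↦ t - k t * t * t - (t - k t * t * t) * (k t * t)) b := by
    rw [cfcₙ_sub (fun t ↦ t - k t * t * t) (fun t ↦ (t - k t * t * t) * (k t * t)) b,
      cfcₙ_mul (fun t ↦ t - k t * t * t) (fun t ↦ k t * t) b, h₁, hcb]
  rw [h₂]
  refine norm_cfcₙ_le fun t ht ↦ ?_
  have ht0 : 0 ≤ t := quasispectrum_nonneg_of_nonneg b hb t ht
  have h₃ : t - k t * t * t - (t - k t * t * t) * (k t * t) =
      r ^ 4 * t / (t ^ 2 + r ^ 2) ^ 2 := by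
    simp only [k]
    field_simp [hne t]
    ring
  rw [h₃, Real.norm_of_nonneg (by positivity), div_le_iff₀ (by positivity)]
  nlinarith [mul_nonneg hr.le (sq_nonneg (t ^ 2)), mul_nonneg (pow_pos hr 3).le (sq_nonneg (t - r)),
    mul_nonneg (pow_pos hr 3).le (sq_nonneg t), pow_pos hr 5]

/-- If `0 ≤ x ≤ b` and `u` is self-adjoint, then `‖√x (1 - u)‖² ≤ ‖(1 - u) b (1 - u)‖`. -/
theorem norm_sqrt_sub_mul_sq_le {A : Type*} [NonUnitalCStarAlgebra A] [PartialOrder A]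
    [StarOrderedRing A] {x b u : A} (hx : 0 ≤ x) (hxb : x ≤ b) (hu : IsSelfAdjoint u) :
    ‖CFC.sqrt x - CFC.sqrt x * u‖ ^ 2 ≤ ‖b - u * b - (b - u * b) * u‖ := by
  have hs : star (CFC.sqrt x) = CFC.sqrt x :=
    IsSelfAdjoint.of_nonneg (CFC.sqrt_nonneg x)
  have hss : CFC.sqrt x * CFC.sqrt x = x := CFC.sqrt_mul_sqrt_self x
  have heq : star (CFC.sqrt x - CFC.sqrt x * u) * (CFC.sqrt x - CFC.sqrt x * u) =
      x - u * x - (x - u * x) * u := by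
    rw [star_sub, star_mul, hs, hu.star_eq]
    conv_rhs => rw [← hss]
    noncomm_ring
  have hle : x - u * x - (x - u * x) * u ≤ b - u * b - (b - u * b) * u := by
    have h : 0 ≤ star (1 - (u : A⁺¹)) * ((b - x : A) : A⁺¹) * (1 - (u : A⁺¹)) :=
      star_left_conjugate_nonneg (Unitization.inr_nonneg_iff.mpr (sub_nonneg.mpr hxb)) _
    have e : star (1 - (u : A⁺¹)) * ((b - x : A) : A⁺¹) * (1 - (u : A⁺¹)) =
        ((b - u * b - (b - u * b) * u - (x - u * x - (x - u * x) * u) : A) : A⁺¹) := by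
      rw [star_sub, star_one, ← Unitization.inr_star, hu.star_eq]
      push_cast
      noncomm_ring
    rw [e] at h
    exact sub_nonneg.mp (Unitization.inr_nonneg_iff.mp h)
  rw [sq, ← CStarRing.norm_star_mul_self, heq]
  exact CStarAlgebra.norm_le_norm_of_nonneg_of_le (heq ▸ star_mul_self_nonneg _) hle

/-- A closed left ideal contains every positive element dominated by one of its elements. -/
theorem Submodule.mem_of_nonneg_of_le_of_isClosed {A : Type*} [NonUnitalCStarAlgebra A]
    [PartialOrder A] [StarOrderedRing A] (L : Submodule ℂ A) (hL : IsClosed (L : Set A))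
    (hmul : ∀ a : A, ∀ y ∈ L, a * y ∈ L) {x b : A} (hb : b ∈ L) (hx : 0 ≤ x) (hxb : x ≤ b) :
    x ∈ L := by
  have hmem : CFC.sqrt x ∈ closure (L : Set A) := by
    refine Metric.mem_closure_iff.mpr fun ε hε ↦ ?_
    obtain ⟨c, hc, hle⟩ := exists_mul_self_norm_compress_le (hx.trans hxb)
      (r := ε ^ 2 / 2) (by positivity)
    refine ⟨CFC.sqrt x * (c * b), hmul _ _ (hmul _ _ hb), ?_⟩
    rw [dist_eq_norm]
    refine lt_of_pow_lt_pow_left₀ 2 hε.le ?_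
    have := (norm_sqrt_sub_mul_sq_le hx hxb hc).trans hle
    nlinarith [pow_pos hε 2]
  rw [hL.closure_eq] at hmem
  rw [← CFC.sqrt_mul_sqrt_self x]
  exact hmul _ _ hmem

/-- If `star` sends the generators `S` into `T`, it sends the closed span of `S` into that of `T`. -/
theorem star_mem_topologicalClosure_span {A : Type*} [NonUnitalCStarAlgebra A] {S T : Set A}
    (h : ∀ z ∈ S, star z ∈ T) {x : A} (hx : x ∈ (Submodule.span ℂ S).topologicalClosure) :
    star x ∈ (Submodule.span ℂ T).topologicalClosure := by
  refine map_mem_closure continuous_star hx fun z hz ↦ ?_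
  induction hz using Submodule.span_induction with
  | mem z hz => exact Submodule.subset_span (h z hz)
  | zero => simp
  | add y z _ _ hy hz => simpa using add_mem hy hz
  | smul c y _ hy => simpa using Submodule.smul_mem _ (star c) hy

/-- The closed span of a set stable under left multiplication is a left ideal. -/
theorem mul_mem_topologicalClosure_span {A : Type*} [NonUnitalCStarAlgebra A] {S : Set A}
    (h : ∀ a : A, ∀ z ∈ S, a * z ∈ S) (a : A) {x : A}
    (hx : x ∈ (Submodule.span ℂ S).topologicalClosure) :
    a * x ∈ (Submodule.span ℂ S).topologicalClosure := by
  refine map_mem_closure (continuous_const_mul a) hx fun z hz ↦ ?_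
  induction hz using Submodule.span_induction with
  | mem z hz => exact Submodule.subset_span (h a z hz)
  | zero => simp
  | add y z _ _ hy hz => simpa [mul_add] using add_mem hy hz
  | smul c y _ hy => simpa [mul_smul_comm] using Submodule.smul_mem _ c hy

/-- Let `φ : C₀(Y) → M(A)` be a *-homomorphism and `U ⊆ Y` open. With
`A_U` the closed span of `{a·φ(f) | f vanishes off U}` and `_U A` the closed span of
`{φ(f)·a | f vanishes off U}`, one has `(A_U)* = _U A`, and `_U A ∩ A_U` is a hereditary
C*-subalgebra of `A`: closed, a *-subalgebra, and hereditary for the order. -/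
theorem stmt8 (A : Type*) [NonUnitalCStarAlgebra A] [PartialOrder A] [StarOrderedRing A]
    (Y : Type*) [TopologicalSpace Y] [LocallyCompactSpace Y] [T2Space Y]
    (φ : C₀(Y, ℂ) →⋆ₙₐ[ℂ] 𝓜(ℂ, A)) (U : Set Y) (hU : IsOpen U)
    (AU UA : Set A)
    (hAU : AU = closure (Submodule.span ℂ
      {z : A | ∃ (a : A) (f : C₀(Y, ℂ)), (∀ t ∈ Uᶜ, f t = 0) ∧ z = (φ f).snd a} : Set A))
    (hUA : UA = closure (Submodule.span ℂ
      {z : A | ∃ (a : A) (f : C₀(Y, ℂ)), (∀ t ∈ Uᶜ, f t = 0) ∧ z = (φ f).fst a} : Set A)) :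
    -- `(A_U)* = _U A`
    (star '' AU = UA) ∧
    -- `B := _U A ∩ A_U` is a closed *-subalgebra ...
    IsClosed (UA ∩ AU) ∧
    (∀ x ∈ UA ∩ AU, star x ∈ UA ∩ AU) ∧
    (∀ x ∈ UA ∩ AU, ∀ y ∈ UA ∩ AU, x * y ∈ UA ∩ AU) ∧
    (∀ x ∈ UA ∩ AU, ∀ y ∈ UA ∩ AU, x + y ∈ UA ∩ AU) ∧
    (∀ (c : ℂ), ∀ x ∈ UA ∩ AU, c • x ∈ UA ∩ AU) ∧
    -- ... which is hereditary
    (∀ x : A, ∀ b ∈ UA ∩ AU, 0 ≤ x → x ≤ b → x ∈ UA ∩ AU) := by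
  set S : Set A :=
    {z : A | ∃ (a : A) (f : C₀(Y, ℂ)), (∀ t ∈ Uᶜ, f t = 0) ∧ z = (φ f).snd a}
  set T : Set A :=
    {z : A | ∃ (a : A) (f : C₀(Y, ℂ)), (∀ t ∈ Uᶜ, f t = 0) ∧ z = (φ f).fst a}
  let L := (Submodule.span ℂ S).topologicalClosure
  let R := (Submodule.span ℂ T).topologicalClosure
  have hLR : ∀ x ∈ L, star x ∈ R := fun x ↦ star_mem_topologicalClosure_span <| by
    rintro _ ⟨a, f, hf, rfl⟩
    refine ⟨star a, star f, fun t ht ↦ by simp [hf t ht], ?_⟩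
    simp [map_star, DoubleCentralizer.star_fst]
  have hRL : ∀ x ∈ R, star x ∈ L := fun x ↦ star_mem_topologicalClosure_span <| by
    rintro _ ⟨a, f, hf, rfl⟩
    refine ⟨star a, star f, fun t ht ↦ by simp [hf t ht], ?_⟩
    simp [map_star, DoubleCentralizer.star_snd]
  have hL : ∀ a : A, ∀ x ∈ L, a * x ∈ L := fun a x ↦ mul_mem_topologicalClosure_span (by
    rintro a _ ⟨a', f, hf, rfl⟩
    exact ⟨a * a', f, hf, ((φ f).snd_mul_left a a').symm⟩) a
  obtain rfl : AU = (L : Set A) := hAU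
  obtain rfl : UA = (R : Set A) := hUA
  have hLc : IsClosed (L : Set A) := Submodule.isClosed_topologicalClosure _
  have hRc : IsClosed (R : Set A) := Submodule.isClosed_topologicalClosure _
  refine ⟨?_, hRc.inter hLc, fun x hx ↦ ⟨hLR x hx.2, hRL x hx.1⟩, ?_,
    fun x hx y hy ↦ ⟨add_mem hx.1 hy.1, add_mem hx.2 hy.2⟩,
    fun c x hx ↦ ⟨R.smul_mem c hx.1, L.smul_mem c hx.2⟩, ?_⟩
  · ext x
    exact ⟨by rintro ⟨y, hy, rfl⟩; exact hLR y hy, fun hx ↦ ⟨star x, hRL x hx, star_star x⟩⟩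
  · refine fun x hx y hy ↦ ⟨?_, hL x y hy.2⟩
    simpa using hLR _ (hL (star y) (star x) (hRL x hx.1))
  · intro x b hb hx hxb
    have hxL : x ∈ L := L.mem_of_nonneg_of_le_of_isClosed hLc hL hb.2 hx hxb
    exact ⟨(IsSelfAdjoint.of_nonneg hx).star_eq ▸ hLR x hxL, hxL⟩
end

section
/- Let H be a complex Hilbert space and K(H) the C*-algebra of compact operators on H. For every closed right ideal L of K(H) there exists a unique closed linear subspace V ⊆ H such that L = { a ∈ K(H) | a(H) ⊆ V }; moreover, L is a minimal nonzero closed right ideal of K(H) if and only if the corresponding subspace V is one-dimensional. -/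
open InnerProductSpace

section CompactRightIdeals

variable {H : Type*} [NormedAddCommGroup H] [InnerProductSpace ℂ H]

/-- Closed right ideals of the algebra of compact operators on `H`, as subspaces of the bounded
operators. -/
structure IsClosedCompactRightIdeal (L : Submodule ℂ (H →L[ℂ] H)) : Prop where
  isCompactOperator : ∀ a ∈ L, IsCompactOperator a
  isClosed : IsClosed (L : Set (H →L[ℂ] H))
  mul_mem : ∀ a ∈ L, ∀ b : H →L[ℂ] H, IsCompactOperator b → a * b ∈ L

/-- The compact operators whose range is contained in `V`. -/
def compactOperatorsInto (V : Submodule ℂ H) : Submodule ℂ (H →L[ℂ] H) where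
  carrier := {a | IsCompactOperator a ∧ ∀ x, a x ∈ V}
  zero_mem' := ⟨isCompactOperator_zero, fun _ ↦ V.zero_mem⟩
  add_mem' ha hb := ⟨ha.1.add hb.1, fun x ↦ V.add_mem (ha.2 x) (hb.2 x)⟩
  smul_mem' c _ ha := ⟨ha.1.smul c, fun x ↦ V.smul_mem c (ha.2 x)⟩

/-- The vectors `v` such that every operator `⟪y, ·⟫ v` belongs to `L`. -/
def rankOneSupport (L : Submodule ℂ (H →L[ℂ] H)) : Submodule ℂ H where
  carrier := {v | ∀ y : H, rankOne ℂ v y ∈ L}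
  zero_mem' y := by simp
  add_mem' hv hw y := by simpa using L.add_mem (hv y) (hw y)
  smul_mem' c v hv y := by simpa using L.smul_mem c (hv y)

theorem mem_compactOperatorsInto {V : Submodule ℂ H} {a : H →L[ℂ] H} :
    a ∈ compactOperatorsInto V ↔ IsCompactOperator a ∧ ∀ x, a x ∈ V :=
  Iff.rfl

theorem mem_rankOneSupport {L : Submodule ℂ (H →L[ℂ] H)} {v : H} :
    v ∈ rankOneSupport L ↔ ∀ y : H, rankOne ℂ v y ∈ L :=
  Iff.rfl

theorem isCompactOperator_rankOne (v y : H) : IsCompactOperator (rankOne ℂ v y : H →L[ℂ] H) :=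
  (isCompactOperator_of_locallyCompactSpace_rng
    (ContinuousLinearMap.toSpanSingleton ℂ v)).comp_clm (innerSL ℂ y)

theorem compactOperatorsInto_mono : Monotone (compactOperatorsInto (H := H)) :=
  fun _ _ h _ ha ↦ ⟨ha.1, fun x ↦ h (ha.2 x)⟩

theorem rankOneSupport_mono : Monotone (rankOneSupport (H := H)) :=
  fun _ _ h _ hv y ↦ h (hv y)

theorem rankOneSupport_compactOperatorsInto (V : Submodule ℂ H) :
    rankOneSupport (compactOperatorsInto V) = V := by
  ext v
  refine ⟨fun hv ↦ ?_, fun hv y ↦ ⟨isCompactOperator_rankOne v y, fun x ↦ V.smul_mem _ hv⟩⟩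
  rcases eq_or_ne v 0 with rfl | h0
  · exact V.zero_mem
  · exact (V.smul_mem_iff (inner_self_ne_zero.2 h0)).1 ((hv v).2 v)

theorem compactOperatorsInto_injective : Function.Injective (compactOperatorsInto (H := H)) :=
  Function.LeftInverse.injective rankOneSupport_compactOperatorsInto

theorem compactOperatorsInto_bot : compactOperatorsInto (⊥ : Submodule ℂ H) = ⊥ := by
  refine (Submodule.eq_bot_iff _).2 fun a ha ↦ ?_
  ext x
  simpa using ha.2 x

theorem isClosed_rankOneSupport {L : Submodule ℂ (H →L[ℂ] H)}
    (hL : IsClosed (L : Set (H →L[ℂ] H))) : IsClosed (rankOneSupport L : Set H) := by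
  have : (rankOneSupport L : Set H) = ⋂ y : H, (fun v : H ↦ rankOne ℂ v y) ⁻¹' L := by
    ext v
    simp [mem_rankOneSupport]
  rw [this]
  exact isClosed_iInter fun y ↦ hL.preimage (by fun_prop)

/-- A compact operator is approximated in norm by its compositions with orthogonal projections
onto finite-dimensional subspaces spanned by vectors in its range. -/
theorem IsCompactOperator.exists_norm_sub_starProjection_le {a : H →L[ℂ] H}
    (ha : IsCompactOperator a) {ε : ℝ} (hε : 0 < ε) :
    ∃ (S : Submodule ℂ H) (_ : FiniteDimensional ℂ S),
      (S : Set H) ⊆ Set.range a ∧ ‖S.starProjection ∘L a - a‖ ≤ ε := by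
  have htb : TotallyBounded (a '' Metric.closedBall 0 1) :=
    (ha.isCompact_closure_image_closedBall (f := a.toLinearMap) 1).totallyBounded.subset
      subset_closure
  obtain ⟨t, hts, htfin, hcov⟩ := Metric.finite_approx_of_totallyBounded htb ε hε
  have : FiniteDimensional ℂ (Submodule.span ℂ t) := FiniteDimensional.span_of_finite ℂ htfin
  refine ⟨Submodule.span ℂ t, this, ?_, ?_⟩
  · have : Submodule.span ℂ t ≤ a.range :=
      Submodule.span_le.2 (hts.trans (Set.image_subset_range _ _))
    exact fun v hv ↦ this hv
  · refine ContinuousLinearMap.opNorm_le_of_unit_norm hε.le fun x hx ↦ ?_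
    obtain ⟨y, hy, hxy⟩ := Set.mem_iUnion₂.1 (hcov ⟨x, by simp [hx], rfl⟩)
    calc ‖(Submodule.span ℂ t).starProjection (a x) - a x‖
        = ⨅ w : Submodule.span ℂ t, ‖a x - w‖ := by
          rw [norm_sub_rev, Submodule.starProjection_minimal]
      _ ≤ ‖a x - y‖ :=
          ciInf_le (f := fun w : Submodule.span ℂ t ↦ ‖a x - w‖)
            ⟨0, Set.forall_mem_range.2 fun _ ↦ norm_nonneg _⟩ ⟨y, Submodule.subset_span hy⟩
      _ ≤ ε := by
          rw [← dist_eq_norm]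
          exact (Metric.mem_ball.1 hxy).le

variable [CompleteSpace H]

theorem isClosedCompactRightIdeal_compactOperatorsInto {V : Submodule ℂ H}
    (hV : IsClosed (V : Set H)) : IsClosedCompactRightIdeal (compactOperatorsInto V) where
  isCompactOperator _ ha := ha.1
  isClosed := by
    have : (compactOperatorsInto V : Set (H →L[ℂ] H)) =
        {a : H →L[ℂ] H | IsCompactOperator a} ∩ ⋂ x : H, (fun a : H →L[ℂ] H ↦ a x) ⁻¹' V := by
      ext a
      simp [mem_compactOperatorsInto]
    rw [this]
    exact isClosed_setOfPred_isCompactOperator.inter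
      (isClosed_iInter fun x ↦ hV.preimage (by fun_prop))
  mul_mem _ ha b _ := ⟨ha.1.comp_clm b, fun x ↦ ha.2 (b x)⟩

theorem starProjection_comp_mem_of_le_rankOneSupport {L : Submodule ℂ (H →L[ℂ] H)}
    {S : Submodule ℂ H} [FiniteDimensional ℂ S] (hS : S ≤ rankOneSupport L) (a : H →L[ℂ] H) :
    S.starProjection ∘L a ∈ L := by
  rw [(stdOrthonormalBasis ℂ S).starProjection_eq_sum_rankOne, ContinuousLinearMap.finsetSum_comp]
  refine L.sum_mem fun i _ ↦ ?_
  rw [rankOne_comp]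
  exact hS (stdOrthonormalBasis ℂ S i).2 _

theorem IsClosedCompactRightIdeal.compactOperatorsInto_rankOneSupport
    {L : Submodule ℂ (H →L[ℂ] H)} (hL : IsClosedCompactRightIdeal L) :
    compactOperatorsInto (rankOneSupport L) = L := by
  refine le_antisymm (fun a ha ↦ ?_) fun a ha ↦ ⟨hL.isCompactOperator a ha, fun x y ↦ ?_⟩
  · refine hL.isClosed.closure_subset (Metric.mem_closure_iff.2 fun ε hε ↦ ?_)
    obtain ⟨S, _, hSa, hS⟩ := ha.1.exists_norm_sub_starProjection_le (half_pos hε)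
    refine ⟨S.starProjection ∘L a, starProjection_comp_mem_of_le_rankOneSupport (fun v hv ↦ ?_) a,
      ?_⟩
    · obtain ⟨x, rfl⟩ := hSa hv
      exact ha.2 x
    · rw [dist_comm, dist_eq_norm]
      exact hS.trans_lt (half_lt_self hε)
  · rw [← comp_rankOne]
    exact hL.mul_mem a ha _ (isCompactOperator_rankOne x y)

/-- The ideal attached to a subspace is a minimal nonzero closed right ideal exactly when
the subspace is an atom in the lattice of subspaces. -/
theorem compactOperatorsInto_minimal_iff_isAtom {V : Submodule ℂ H} :
    (compactOperatorsInto V ≠ ⊥ ∧ ∀ L' : Submodule ℂ (H →L[ℂ] H), IsClosedCompactRightIdeal L' →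
      L' ≤ compactOperatorsInto V → L' = ⊥ ∨ L' = compactOperatorsInto V) ↔ IsAtom V := by
  have hbot : compactOperatorsInto V = ⊥ ↔ V = ⊥ := by
    rw [← compactOperatorsInto_bot, compactOperatorsInto_injective.eq_iff]
  constructor
  · rintro ⟨hne, hmin⟩
    have hV0 : V ≠ ⊥ := fun h ↦ hne (hbot.2 h)
    obtain ⟨v, hv, hv0⟩ := V.ne_bot_iff.1 hV0
    have hle : Submodule.span ℂ {v} ≤ V := (Submodule.span_singleton_le_iff_mem v V).2 hv
    have hspan : Submodule.span ℂ {v} = V := by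
      rcases hmin _ (isClosedCompactRightIdeal_compactOperatorsInto
        (Submodule.closed_of_finiteDimensional (Submodule.span ℂ {v})))
        (compactOperatorsInto_mono hle) with h | h
      · rw [← compactOperatorsInto_bot, compactOperatorsInto_injective.eq_iff,
          Submodule.span_singleton_eq_bot] at h
        exact absurd h hv0
      · exact compactOperatorsInto_injective h
    rw [← hspan]
    exact nonzero_span_atom v hv0
  · intro hatom
    refine ⟨fun h ↦ hatom.1 (hbot.1 h), fun L' hL' hle ↦ ?_⟩
    rw [← hL'.compactOperatorsInto_rankOneSupport, ← compactOperatorsInto_bot]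
    have hle' : rankOneSupport L' ≤ V :=
      (rankOneSupport_mono hle).trans_eq (rankOneSupport_compactOperatorsInto V)
    exact (hatom.le_iff.1 hle').imp (congrArg _) (congrArg _)

end CompactRightIdeals

/-- For a complex Hilbert space `H`, every closed right ideal `L` of the
C*-algebra `K(H)` of compact operators is of the form `{a ∈ K(H) | a(H) ⊆ V}` for a unique
closed subspace `V ⊆ H`; and `L` is a minimal nonzero closed right ideal iff `V` is
one-dimensional. -/
theorem stmt9 (H : Type*) [NormedAddCommGroup H] [InnerProductSpace ℂ H] [CompleteSpace H]
    (L : Submodule ℂ (H →L[ℂ] H))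
    (hLcompact : ∀ a ∈ L, IsCompactOperator a)
    (hLclosed : IsClosed (L : Set (H →L[ℂ] H)))
    (hLright : ∀ a ∈ L, ∀ b : H →L[ℂ] H, IsCompactOperator b → a * b ∈ L) :
    -- existence and uniqueness of `V`
    (∃! V : Submodule ℂ H, IsClosed (V : Set H) ∧
      (L : Set (H →L[ℂ] H)) = {a : H →L[ℂ] H | IsCompactOperator a ∧ ∀ x : H, a x ∈ V}) ∧
    -- minimality corresponds to `dim V = 1`
    (∀ V : Submodule ℂ H, IsClosed (V : Set H) →
      (L : Set (H →L[ℂ] H)) = {a : H →L[ℂ] H | IsCompactOperator a ∧ ∀ x : H, a x ∈ V} →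
      ((L ≠ ⊥ ∧ ∀ L' : Submodule ℂ (H →L[ℂ] H),
          (∀ a ∈ L', IsCompactOperator a) → IsClosed (L' : Set (H →L[ℂ] H)) →
          (∀ a ∈ L', ∀ b : H →L[ℂ] H, IsCompactOperator b → a * b ∈ L') →
          L' ≤ L → L' = ⊥ ∨ L' = L) ↔
        Module.finrank ℂ V = 1)) := by
  have hL : IsClosedCompactRightIdeal L := ⟨hLcompact, hLclosed, hLright⟩
  have heq : ∀ V : Submodule ℂ H, (L : Set (H →L[ℂ] H)) =
      {a : H →L[ℂ] H | IsCompactOperator a ∧ ∀ x : H, a x ∈ V} ↔ L = compactOperatorsInto V :=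
    fun V ↦ SetLike.coe_set_eq (q := compactOperatorsInto V)
  simp only [heq]
  refine ⟨⟨rankOneSupport L, ⟨isClosed_rankOneSupport hLclosed,
    hL.compactOperatorsInto_rankOneSupport.symm⟩, ?_⟩, ?_⟩
  · rintro V ⟨-, rfl⟩
    exact (rankOneSupport_compactOperatorsInto V).symm
  · rintro V - rfl
    rw [← Submodule.isAtom_iff_finrank_eq_one, ← compactOperatorsInto_minimal_iff_isAtom]
    exact and_congr_right' (forall_congr' fun L' ↦
      ⟨fun h hL' ↦ h hL'.1 hL'.2 hL'.3, fun h h₁ h₂ h₃ ↦ h ⟨h₁, h₂, h₃⟩⟩)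
end
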